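/- Let n be a positive integer and let B be a 2-basic set of the symmetric group S_n which contains every irreducible complex character χ of S_n satisfying ε⊗χ = χ, where ε is the sign character. Then the restriction B_{A_n} of B to the alternating group A_n, namely the set of all irreducible constituents of the restrictions to A_n of the characters in B, is a 2-basic set of A_n. -/

import Mathlib

open scoped Classical

/-- `f : G → ℂ` is an irreducible complex character of `G`. -/
def IsIrrChar (G : Type) [Group G] (f : G → ℂ) : Prop :=
  ∃ V : FDRep ℂ G, CategoryTheory.Simple V ∧ FDRep.character V = f

/-- Restriction of a function to 2-regular (odd order) elements, extended by zero. -/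
noncomputable def twoReg {G : Type*} [Monoid G] (f : G → ℂ) : G → ℂ :=
  fun g => if Odd (orderOf g) then f g else 0

/-- `B` is a 2-basic set of `G`: the restrictions to 2-regular elements of the members of `B`
are `ℤ`-linearly independent and span the same `ℤ`-module as the restrictions to 2-regular
elements of all irreducible characters. -/
def IsTwoBasicSet (G : Type) [Group G] (B : Set (G → ℂ)) : Prop :=
  B ⊆ {f | IsIrrChar G f} ∧
  LinearIndependent ℤ (fun f : B => twoReg (f : G → ℂ)) ∧
  Submodule.span ℤ (twoReg '' B) = Submodule.span ℤ (twoReg '' {f | IsIrrChar G f})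

/-- The restriction of `B ⊆ Irr(S_n)` to the alternating group: the set of irreducible
characters of A_n occurring as a constituent of the restriction to A_n of some member of B. -/
noncomputable def restrictionToAlternating (n : ℕ) (B : Set (Equiv.Perm (Fin n) → ℂ)) :
    Set (alternatingGroup (Fin n) → ℂ) :=
  {θ | IsIrrChar (alternatingGroup (Fin n)) θ ∧
    ∃ f ∈ B, (∑ a : alternatingGroup (Fin n), f a * (starRingEnd ℂ) (θ a)) ≠ 0}

open scoped ComplexConjugate

section CharacterTheory

variable {G : Type} [Group G] [Fintype G]

/-- The unnormalized Hermitian product with `h`, as a linear functional. -/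
noncomputable def charPairing (h : G → ℂ) : (G → ℂ) →ₗ[ℂ] ℂ where
  toFun f := ∑ a, f a * conj (h a)
  map_add' f f' := by simp [add_mul, Finset.sum_add_distrib]
  map_smul' c f := by simp [Finset.mul_sum, mul_assoc]

omit [Group G] in
lemma charPairing_apply (h f : G → ℂ) : charPairing h f = ∑ a, f a * conj (h a) := rfl

omit [Group G] in
lemma charPairing_self (f : G → ℂ) :
    charPairing f f = ((∑ a, ‖f a‖ ^ 2 : ℝ) : ℂ) := by
  simp [charPairing_apply, Complex.mul_conj, Complex.normSq_eq_norm_sq]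

open Matrix ComplexOrder in
lemma Representation.character_inv {V : Type*} [AddCommGroup V] [Module ℂ V]
    [FiniteDimensional ℂ V] (ρ : Representation ℂ G V) (g : G) :
    ρ.character g⁻¹ = conj (ρ.character g) := by
  let b := Module.finBasis ℂ V
  let M : G →* Matrix (Fin (Module.finrank ℂ V)) (Fin (Module.finrank ℂ V)) ℂ :=
    (LinearMap.toMatrixAlgEquiv b).toMonoidHom.comp ρ
  have hM (x : G) : (M x).trace = ρ.character x := by
    rw [Representation.character, LinearMap.trace_eq_matrix_trace ℂ b]; rfl
  let P := ∑ x, (M x)ᴴ * M x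
  have hP : P.PosDef := by
    have h1 : P = (M 1)ᴴ * M 1 + ∑ x ∈ Finset.univ.erase 1, (M x)ᴴ * M x :=
      (Finset.add_sum_erase _ (fun x => (M x)ᴴ * M x) (Finset.mem_univ 1)).symm
    rw [h1]
    refine Matrix.PosDef.add_posSemidef ?_ ?_
    · simpa using Matrix.PosDef.one
    · exact Matrix.posSemidef_sum _ fun x _ => Matrix.posSemidef_conjTranspose_mul_self _
  have hinv : (M g)ᴴ * P * M g = P := by
    simp only [P, Finset.mul_sum, Finset.sum_mul]
    refine Fintype.sum_equiv (Equiv.mulRight g) _ _ fun x => ?_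
    simp [Matrix.mul_assoc]
  have hu : IsUnit P.det := (Matrix.isUnit_iff_isUnit_det _).1 hP.isUnit
  have hg : M g * M g⁻¹ = 1 := by rw [← map_mul]; simp
  have h2 : P * M g⁻¹ = (M g)ᴴ * P := by
    conv_lhs => rw [← hinv]
    rw [Matrix.mul_assoc, hg, mul_one]
  have h3 : M g⁻¹ = P⁻¹ * ((M g)ᴴ * P) := by
    rw [← h2, ← Matrix.mul_assoc, Matrix.nonsing_inv_mul _ hu, one_mul]
  rw [← hM, ← hM, h3, Matrix.trace_mul_comm, Matrix.mul_assoc, Matrix.mul_nonsing_inv _ hu,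
    mul_one, Matrix.trace_conjTranspose]
  rfl

lemma FDRep.character_inv (V : FDRep ℂ G) (g : G) :
    V.character g⁻¹ = conj (V.character g) :=
  Representation.character_inv V.ρ g

lemma FDRep.simple_iff_charPairing_self (V : FDRep ℂ G) :
    CategoryTheory.Simple V ↔ charPairing V.character V.character = Nat.card G := by
  rw [FDRep.simple_iff_char_is_norm_one, charPairing_apply]
  simp_rw [FDRep.character_inv]

lemma FDRep.isIrrChar_iff (V : FDRep ℂ G) :
    IsIrrChar G V.character ↔ charPairing V.character V.character = Nat.card G := by
  refine ⟨?_, fun h => ⟨V, V.simple_iff_charPairing_self.2 h, rfl⟩⟩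
  rintro ⟨W, hW, h⟩
  rw [← h, ← W.simple_iff_charPairing_self]
  exact hW

lemma FDRep.exists_charPairing_eq (V W : FDRep ℂ G) :
    ∃ k : ℕ, charPairing V.character W.character = Nat.card G * k := by
  have : Invertible (Nat.card G : ℂ) := invertibleOfNonzero (by simp)
  have h := FDRep.scalar_product_char_eq_finrank_equivariant V W
  refine ⟨Module.finrank ℂ (V ⟶ W), ?_⟩
  rw [← h, mul_inv_cancel_left₀ (by simp), charPairing_apply]
  simp_rw [FDRep.character_inv]

namespace IsIrrChar

variable {f h : G → ℂ}

lemma charPairing_self (hf : IsIrrChar G f) : charPairing f f = Nat.card G := by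
  obtain ⟨V, hV, rfl⟩ := hf
  exact V.simple_iff_charPairing_self.1 hV

lemma charPairing_eq_zero (hf : IsIrrChar G f) (hh : IsIrrChar G h) (hne : f ≠ h) :
    charPairing h f = 0 := by
  obtain ⟨V, hV, rfl⟩ := hf
  obtain ⟨W, hW, rfl⟩ := hh
  have : Invertible (Nat.card G : ℂ) := invertibleOfNonzero (by simp)
  have h := FDRep.char_orthonormal V W
  rw [if_neg fun ⟨e⟩ => hne (FDRep.char_iso e)] at h
  simp_rw [FDRep.character_inv] at h
  rcases mul_eq_zero.1 h with h | h
  · simp at h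
  · exact h

omit [Fintype G] in
lemma conj_invariant (hf : IsIrrChar G f) (x g : G) : f (x * g * x⁻¹) = f g := by
  obtain ⟨V, -, rfl⟩ := hf
  exact V.char_conj g x

lemma one_ne_zero (hf : IsIrrChar G f) : f 1 ≠ 0 := by
  obtain ⟨V, hV, rfl⟩ := hf
  intro h0
  rw [FDRep.char_one, Nat.cast_eq_zero] at h0
  have : Subsingleton V := Module.finrank_zero_iff.1 h0
  have hz : ∀ g, V.character g = 0 := fun g => by
    rw [FDRep.character, Subsingleton.elim (V.ρ g) 0, map_zero]
  have := V.simple_iff_charPairing_self.1 hV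
  simp [charPairing_apply, hz, eq_comm] at this

end IsIrrChar

lemma linearIndependent_isIrrChar :
    LinearIndependent ℤ (fun f : {f | IsIrrChar G f} => (f : G → ℂ)) := by
  rw [linearIndependent_iff']
  intro s c hc j hj
  have h := congrArg (charPairing (j : G → ℂ)) hc
  rw [map_zero, map_sum, Finset.sum_eq_single_of_mem j hj, map_zsmul,
    j.2.charPairing_self] at h
  · simpa using h
  · intro i _ hij
    rw [map_zsmul, i.2.charPairing_eq_zero j.2 (fun h => hij (Subtype.ext h)), smul_zero]

/-- A class function acts by a scalar on every irreducible character. -/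
lemma IsIrrChar.exists_sum_mul_eq {f c : G → ℂ} (hf : IsIrrChar G f)
    (hc : ∀ x g, c (x * g * x⁻¹) = c g) : ∃ l : ℂ, ∀ b, ∑ a, c a * f (b * a) = l * f b := by
  obtain ⟨V, hV, rfl⟩ := hf
  let T : V →ₗ[ℂ] V := ∑ a, c a • V.ρ a
  have hT (b : G) : T * V.ρ b = V.ρ b * T := by
    simp only [T, Finset.mul_sum, Finset.sum_mul, mul_smul_comm, smul_mul_assoc, ← map_mul]
    refine Fintype.sum_equiv (MulAut.conj b⁻¹).toEquiv _ _ fun a => ?_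
    simp only [MulEquiv.toEquiv_eq_coe, MulEquiv.coe_toEquiv, MulAut.conj_apply]
    rw [hc]
    simp [mul_assoc]
  have : Invertible (Nat.card G : ℂ) := invertibleOfNonzero (by simp)
  have h1 := Representation.card_inv_mul_sum_char_mul_char_eq_finrank
    (k := ℂ) (G := G) V.ρ V.ρ
  have h2 := (FDRep.simple_iff_char_is_norm_one V).1 hV
  have h3 : Module.finrank ℂ (Representation.IntertwiningMap V.ρ V.ρ) = 1 := by
    rw [← Nat.cast_inj (R := ℂ), ← h1, Nat.cast_one]
    erw [h2]
    simp
  let T' : Representation.IntertwiningMap V.ρ V.ρ := ⟨T, fun g => hT g⟩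
  have hid : Representation.IntertwiningMap.id V.ρ ≠ 0 := by
    intro h0
    have hone := (V.isIrrChar_iff.2 (V.simple_iff_charPairing_self.1 hV)).one_ne_zero
    rw [FDRep.char_one, Nat.cast_ne_zero] at hone
    have := Module.nontrivial_of_finrank_pos (Nat.pos_of_ne_zero hone)
    obtain ⟨v, hv⟩ := exists_ne (0 : V)
    exact hv (congrArg (fun F : Representation.IntertwiningMap V.ρ V.ρ => F v) h0)
  obtain ⟨l, hl⟩ := (finrank_eq_one_iff_of_nonzero' _ hid).1 h3 T'
  have hl' : T = l • LinearMap.id := by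
    ext v
    have := congrArg (fun F : Representation.IntertwiningMap V.ρ V.ρ => F v) hl
    exact this.symm
  refine ⟨l, fun b => ?_⟩
  have h4 : LinearMap.trace ℂ V (V.ρ b * T) = l * V.character b := by
    rw [hl', mul_smul_comm, map_smul, smul_eq_mul]; rfl
  rw [← h4]
  simp [T, Finset.mul_sum, FDRep.character, map_sum]

lemma Representation.isIrrChar_character {V : Type} [AddCommGroup V] [Module ℂ V]
    [FiniteDimensional ℂ V] (ρ : Representation ℂ G V) [ρ.IsIrreducible] :
    IsIrrChar G ρ.character := by
  refine (FDRep.isIrrChar_iff (FDRep.of ρ)).2 ?_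
  have : Invertible (Nat.card G : ℂ) := invertibleOfNonzero (by simp)
  have h := Representation.card_inv_mul_sum_char_mul_char_eq_finrank ρ ρ
  rw [Representation.IsIrreducible.finrank_intertwiningMap_self, Nat.cast_one] at h
  simp_rw [Representation.character_inv] at h
  exact (inv_mul_eq_one₀ (by simp)).1 h |>.symm

omit [Fintype G] in
lemma Representation.character_eq_add_of_isCompl {V : Type*} [AddCommGroup V] [Module ℂ V]
    [FiniteDimensional ℂ V] (ρ : Representation ℂ G V) (N N' : Subrepresentation ρ)
    (h : IsCompl N.toSubmodule N'.toSubmodule) :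
    ρ.character = N.toRepresentation.character + N'.toRepresentation.character := by
  ext g
  rw [Pi.add_apply, Representation.character, Representation.character,
    Representation.character, ← LinearMap.trace_prodMap',
    ← LinearMap.trace_conj' _ (Submodule.prodEquivOfIsCompl _ _ h)]
  congr 1
  refine LinearMap.ext fun v => ?_
  obtain ⟨w, rfl⟩ := (Submodule.prodEquivOfIsCompl _ _ h).surjective v
  rw [LinearEquiv.conj_apply_apply, LinearEquiv.symm_apply_apply,
    Submodule.coe_prodEquivOfIsCompl', Submodule.coe_prodEquivOfIsCompl', map_add]
  rfl

lemma Representation.exists_multiset_isIrrChar {V : Type} [AddCommGroup V] [Module ℂ V]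
    [FiniteDimensional ℂ V] (ρ : Representation ℂ G V) :
    ∃ s : Multiset (G → ℂ), (∀ f ∈ s, IsIrrChar G f) ∧ s.sum = ρ.character := by
  induction hd : Module.finrank ℂ V using Nat.strong_induction_on generalizing V with
  | _ d ih =>
  by_cases hirr : ρ.IsIrreducible
  · exact ⟨{ρ.character}, by simpa using ρ.isIrrChar_character, by simp⟩
  rcases subsingleton_or_nontrivial V with hV | hV
  · refine ⟨0, by simp, funext fun g => ?_⟩
    rw [Representation.character, Subsingleton.elim (ρ g) 0]
    simp
  obtain ⟨N, hbot, htop⟩ : ∃ N : Subrepresentation ρ, N ≠ ⊥ ∧ N ≠ ⊤ := by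
    by_contra! hcon
    have : Nontrivial (Subrepresentation ρ) := ⟨⊥, ⊤, fun h => ?_⟩
    · exact hirr ⟨fun N => or_iff_not_imp_left.2 (hcon N)⟩
    exact bot_ne_top (congrArg Subrepresentation.toSubmodule h)
  have : NeZero (Nat.card G : ℂ) := ⟨by simp⟩
  obtain ⟨N', hN⟩ := exists_isCompl N
  have hc : IsCompl N.toSubmodule N'.toSubmodule := by
    refine IsCompl.of_eq ?_ ?_
    · exact congrArg Subrepresentation.toSubmodule hN.inf_eq_bot
    · exact congrArg Subrepresentation.toSubmodule hN.sup_eq_top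
  have hlt (M : Subrepresentation ρ) (hM : M ≠ ⊤) : Module.finrank ℂ M.toSubmodule < d :=
    hd ▸ Submodule.finrank_lt fun h => hM (Subrepresentation.toSubmodule_injective h)
  have hN'top : N' ≠ ⊤ := by
    rintro rfl
    exact hbot (by simpa using hN.inf_eq_bot)
  obtain ⟨s, hs, hsum⟩ := ih _ (hlt N htop) N.toRepresentation rfl
  obtain ⟨t, ht, htsum⟩ := ih _ (hlt N' hN'top) N'.toRepresentation rfl
  refine ⟨s + t, fun f hf => (Multiset.mem_add.1 hf).elim (hs f) (ht f), ?_⟩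
  rw [Multiset.sum_add, hsum, htsum, ρ.character_eq_add_of_isCompl N N' hc]

/-- The regular representation, by right translation of functions. -/
def rightRegular (G : Type) [Group G] : Representation ℂ G (G → ℂ) where
  toFun g := LinearMap.funLeft ℂ ℂ (· * g)
  map_one' := by ext; simp [LinearMap.funLeft_apply]
  map_mul' g h := by
    refine LinearMap.ext fun f => funext fun x => ?_
    simp [LinearMap.funLeft_apply, mul_assoc]

lemma character_rightRegular (g : G) :
    (rightRegular G).character g = if g = 1 then (Nat.card G : ℂ) else 0 := by
  rw [Representation.character, LinearMap.trace_eq_matrix_trace ℂ (Pi.basisFun ℂ G)]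
  simp [Matrix.trace, rightRegular, LinearMap.funLeft_apply,
    Pi.single_apply]

lemma charPairing_multiset_sum {s : Multiset (G → ℂ)} (hs : ∀ f ∈ s, IsIrrChar G f) {h : G → ℂ}
    (hh : IsIrrChar G h) : charPairing h s.sum = Nat.card G * s.count h := by
  induction s using Multiset.induction_on with
  | empty => simp
  | cons f s ih =>
    rw [Multiset.sum_cons, map_add, ih fun k hk => hs k (Multiset.mem_cons_of_mem hk)]
    have hf := hs f (Multiset.mem_cons_self f s)
    by_cases hfh : f = h
    · subst hfh
      rw [hf.charPairing_self, Multiset.count_cons_self]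
      push_cast
      ring
    · rw [hf.charPairing_eq_zero hh hfh, Multiset.count_cons_of_ne (Ne.symm hfh), zero_add]

lemma charPairing_multiset_sum_ne_zero {s : Multiset (G → ℂ)} (hs : ∀ f ∈ s, IsIrrChar G f)
    {h : G → ℂ} (hh : h ∈ s) : charPairing h s.sum ≠ 0 := by
  rw [charPairing_multiset_sum hs (hs h hh)]
  simpa using hh

omit [Group G] in
lemma charPairing_add (h h' f : G → ℂ) :
    charPairing (h + h') f = charPairing h f + charPairing h' f := by
  simp [charPairing_apply, mul_add, Finset.sum_add_distrib]

lemma charPairing_comp_mulEquiv (e : G ≃* G) (h f : G → ℂ) :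
    charPairing (h ∘ e) (f ∘ e) = charPairing h f :=
  e.toEquiv.sum_comp fun a => f a * conj (h a)

lemma IsIrrChar.comp_mulEquiv {f : G → ℂ} (hf : IsIrrChar G f) (e : G ≃* G) :
    IsIrrChar G (f ∘ e) := by
  have hnorm := hf.charPairing_self
  obtain ⟨V, -, rfl⟩ := hf
  refine (FDRep.isIrrChar_iff (FDRep.of (V.ρ.comp (e : G →* G)))).2 ?_
  rw [← hnorm]
  exact charPairing_comp_mulEquiv e V.character V.character

omit [Fintype G] in
lemma IsIrrChar.exists_multiset_restrict {H : Subgroup G} [Fintype H] {f : G → ℂ}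
    (hf : IsIrrChar G f) :
    ∃ s : Multiset (H → ℂ), (∀ h ∈ s, IsIrrChar H h) ∧ s.sum = fun a : H => f a := by
  obtain ⟨V, -, rfl⟩ := hf
  exact Representation.exists_multiset_isIrrChar (V.ρ.comp H.subtype)

/-- Every irreducible character of a subgroup occurs in the restriction of an irreducible
character of the whole group. -/
lemma IsIrrChar.exists_charPairing_restrict_ne_zero (H : Subgroup G) [Fintype H] {f : H → ℂ}
    (hf : IsIrrChar H f) :
    ∃ h : G → ℂ, IsIrrChar G h ∧ charPairing f (fun a : H => h a) ≠ 0 := by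
  obtain ⟨s, hs, hsum⟩ := (rightRegular G).exists_multiset_isIrrChar
  by_contra! hcon
  let r : (G → ℂ) →ₗ[ℂ] ℂ := charPairing f ∘ₗ LinearMap.funLeft ℂ ℂ ((↑) : H → G)
  have h0 : r s.sum = 0 := by
    rw [map_multiset_sum]
    refine Multiset.sum_eq_zero fun x hx => ?_
    obtain ⟨h, hh, rfl⟩ := Multiset.mem_map.1 hx
    exact hcon h (hs h hh)
  rw [hsum] at h0
  have h1 : r (rightRegular G).character = Nat.card G * conj (f 1) := by
    simp [r, charPairing_apply, LinearMap.funLeft_apply, character_rightRegular]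
  rw [h1] at h0
  simp [hf.one_ne_zero] at h0

section IndexTwo

variable {H : Subgroup G} [Fintype H]

/-- If an irreducible character does not vanish outside a subgroup of index two, then its
restriction to that subgroup is irreducible. -/
lemma IsIrrChar.restrict_of_ne_zero (hH : H.index = 2) {f : G → ℂ} (hf : IsIrrChar G f)
    {x : G} (hx : x ∉ H) (hfx : f x ≠ 0) : IsIrrChar H (fun a : H => f a) := by
  have hnorm := hf.charPairing_self
  rw [_root_.charPairing_self, ← H.card_mul_index, hH] at hnorm
  have hone := hf.one_ne_zero
  obtain ⟨V, -, rfl⟩ := hf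
  let W : FDRep ℂ H := FDRep.of (V.ρ.comp H.subtype)
  obtain ⟨k, hk⟩ := W.exists_charPairing_eq W
  refine W.isIrrChar_iff.2 ?_
  rw [hk]
  rw [_root_.charPairing_self] at hk
  have hWV (a : H) : W.character a = V.character a := rfl
  simp_rw [hWV] at hk
  have hk' : (∑ a : H, ‖V.character a‖ ^ 2) = (Nat.card H : ℝ) * k := by exact_mod_cast hk
  have hn' : (∑ a : G, ‖V.character a‖ ^ 2) = (Nat.card H : ℝ) * 2 := by exact_mod_cast hnorm
  have hc : (0 : ℝ) < Nat.card H := by exact_mod_cast Nat.card_pos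
  have hsub : (∑ a : H, ‖V.character a‖ ^ 2) = ∑ a with a ∈ H, ‖V.character a‖ ^ 2 :=
    (Finset.sum_subtype _ (by simp) fun a => ‖V.character a‖ ^ 2).symm
  have hlt : (∑ a : H, ‖V.character a‖ ^ 2) < ∑ a : G, ‖V.character a‖ ^ 2 := by
    rw [hsub]
    exact Finset.sum_lt_sum_of_subset (Finset.filter_subset _ _) (Finset.mem_univ x)
      (by simpa using hx) (by positivity) fun _ _ _ => by positivity
  have hpos : 0 < ∑ a : H, ‖V.character a‖ ^ 2 := by
    refine Finset.sum_pos' (fun _ _ => by positivity) ⟨1, Finset.mem_univ _, ?_⟩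
    have : V.character ((1 : H) : G) ≠ 0 := hone
    positivity
  rw [hk', hn'] at hlt
  rw [hk'] at hpos
  have h2 : k < 2 := by exact_mod_cast lt_of_mul_lt_mul_left hlt hc.le
  have h0 : 0 < k := by exact_mod_cast pos_of_mul_pos_right hpos hc.le
  obtain rfl : k = 1 := by omega
  simp

variable [H.Normal]

omit [Fintype G] [Fintype H] in
lemma IsIrrChar.comp_conjNormal_of_mem {f : H → ℂ} (hf : IsIrrChar H f) {x : G} (hx : x ∈ H) :
    f ∘ MulAut.conjNormal x = f :=
  funext fun a => hf.conj_invariant ⟨x, hx⟩ a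

omit [Fintype G] [Fintype H] in
lemma comp_conjNormal_mul (f : H → ℂ) (x y : G) :
    f ∘ MulAut.conjNormal (x * y) = (f ∘ MulAut.conjNormal x) ∘ MulAut.conjNormal y := by
  rw [map_mul]; rfl

omit [Fintype G] [Fintype H] in
lemma IsIrrChar.comp_conjNormal_eq (hH : H.index = 2) {f : H → ℂ} (hf : IsIrrChar H f) {x y : G}
    (hx : x ∉ H) (hy : y ∉ H) : f ∘ MulAut.conjNormal x = f ∘ MulAut.conjNormal y := by
  have h : x * y⁻¹ ∈ H := (Subgroup.mul_mem_iff_of_index_two hH).2 (by simp [hx, hy])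
  rw [← inv_mul_cancel_right x y, comp_conjNormal_mul, hf.comp_conjNormal_of_mem h]

omit [Fintype G] [Fintype H] in
lemma IsIrrChar.add_comp_conjNormal (hH : H.index = 2) {f : H → ℂ} (hf : IsIrrChar H f) {y : G}
    (hy : y ∉ H) (x : G) :
    (f + f ∘ MulAut.conjNormal y) ∘ MulAut.conjNormal x = f + f ∘ MulAut.conjNormal y := by
  have h : (f + f ∘ MulAut.conjNormal y) ∘ MulAut.conjNormal x =
    f ∘ MulAut.conjNormal x + f ∘ MulAut.conjNormal (y * x) := by
    rw [comp_conjNormal_mul]; rfl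
  rw [h]
  have hyx := Subgroup.mul_mem_iff_of_index_two hH (a := y) (b := x)
  by_cases hx : x ∈ H
  · rw [hf.comp_conjNormal_of_mem hx, hf.comp_conjNormal_eq hH (by tauto) hy]
  · rw [hf.comp_conjNormal_of_mem (by tauto : y * x ∈ H), hf.comp_conjNormal_eq hH hx hy, add_comm]

/-- The constituents of the restriction of an irreducible character to a normal subgroup of
index two form a single orbit. -/
lemma IsIrrChar.eq_or_eq_of_mem_restrict (hH : H.index = 2) {f : G → ℂ} (hf : IsIrrChar G f)
    {θ : H → ℂ} (hθ : IsIrrChar H θ) (hfθ : charPairing θ (fun a : H => f a) ≠ 0) {y : G}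
    (hy : y ∉ H) {s : Multiset (H → ℂ)} (hs : ∀ h ∈ s, IsIrrChar H h)
    (hsum : s.sum = fun a : H => f a) {h : H → ℂ} (hh : h ∈ s) :
    h = θ ∨ h = θ ∘ MulAut.conjNormal y := by
  by_contra! hne
  set η : H → ℂ := θ + θ ∘ MulAut.conjNormal y with hη
  have hηinv (x : G) (a : H) : η (MulAut.conjNormal x a) = η a :=
    congrFun (hθ.add_comp_conjNormal hH hy x) a
  have hθ' : IsIrrChar H (θ ∘ MulAut.conjNormal y) := hθ.comp_mulEquiv _
  let c : G → ℂ := fun g => if hg : g ∈ H then conj (η ⟨g, hg⟩) else 0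
  have hc (x g : G) : c (x * g * x⁻¹) = c g := by
    by_cases hg : g ∈ H
    · have hxg : x * g * x⁻¹ ∈ H := Subgroup.Normal.conj_mem inferInstance g hg x
      simp only [c, hg, hxg, dif_pos]
      exact congrArg conj (hηinv x ⟨g, hg⟩)
    · have hxg : x * g * x⁻¹ ∉ H := by
        rwa [Subgroup.Normal.mem_comm_iff inferInstance, inv_mul_cancel_left]
      simp only [c, hg, hxg, dif_neg, not_false_iff]
  let L : (H → ℂ) →ₗ[ℂ] (H → ℂ) :=
    { toFun := fun k b => ∑ a, conj (η a) * k (b * a)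
      map_add' := fun k k' => by ext; simp [mul_add, Finset.sum_add_distrib]
      map_smul' := fun z k => by ext; simp [Finset.mul_sum, mul_left_comm] }
  have hL1 (k : H → ℂ) : L k 1 = charPairing η k := by
    simp [L, charPairing_apply, mul_comm]
  obtain ⟨l, hl⟩ := hf.exists_sum_mul_eq hc
  have hLf : L s.sum = l • s.sum := by
    ext b
    rw [hsum, Pi.smul_apply, smul_eq_mul, ← hl]
    simp only [L, LinearMap.coe_mk, AddHom.coe_mk, c, dite_mul, zero_mul]
    rw [← Finset.sum_filter_add_sum_filter_not Finset.univ (· ∈ H)]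
    rw [Finset.sum_subtype (p := (· ∈ H)) _ (by simp)]
    rw [Finset.sum_eq_zero (s := Finset.univ.filter (· ∉ H)), add_zero]
    · refine Finset.sum_congr rfl fun a _ => ?_
      simp
    · intro a ha
      rw [dif_neg (by simpa using ha)]
  have hLk (k : H → ℂ) (hk : k ∈ s) : charPairing h (L k) = 0 := by
    obtain ⟨m, hm⟩ := (hs k hk).exists_sum_mul_eq (c := fun a => conj (η a))
      (fun x g => congrArg conj (hηinv x g))
    have hLm : L k = m • k := funext hm
    rw [hLm, map_smul, smul_eq_mul]
    by_cases hkh : k = h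
    · subst hkh
      have h1 := hL1 k
      rw [hLm, hη, charPairing_add, (hs k hk).charPairing_eq_zero hθ hne.1,
        (hs k hk).charPairing_eq_zero hθ' hne.2, add_zero, Pi.smul_apply, smul_eq_mul] at h1
      rw [(mul_eq_zero.1 h1).resolve_right (hs k hk).one_ne_zero, zero_mul]
    · rw [(hs k hk).charPairing_eq_zero (hs h hh) hkh, mul_zero]
  have hzero : charPairing h (L s.sum) = 0 := by
    rw [map_multiset_sum, map_multiset_sum, Multiset.map_map]
    refine Multiset.sum_eq_zero fun x hx => ?_
    obtain ⟨k, hk, rfl⟩ := Multiset.mem_map.1 hx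
    exact hLk k hk
  rw [hLf, map_smul, smul_eq_mul] at hzero
  have hl0 : l = 0 := (mul_eq_zero.1 hzero).resolve_right (charPairing_multiset_sum_ne_zero hs hh)
  have h1 := hL1 s.sum
  have hinv : (fun a : H => f a) ∘ MulAut.conjNormal y = fun a : H => f a :=
    funext fun a => hf.conj_invariant y a
  rw [hLf, hl0, zero_smul, Pi.zero_apply, hη, charPairing_add, hsum] at h1
  nth_rewrite 2 [← hinv] at h1
  rw [charPairing_comp_mulEquiv, ← two_mul] at h1
  exact hfθ (by simpa using h1.symm)

/-- Clifford's theorem in index two, up to a rational multiple. -/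
lemma IsIrrChar.exists_add_comp_conjNormal_eq_smul (hH : H.index = 2) {f : G → ℂ}
    (hf : IsIrrChar G f) {θ : H → ℂ} (hθ : IsIrrChar H θ)
    (hfθ : charPairing θ (fun a : H => f a) ≠ 0) {y : G} (hy : y ∉ H) :
    ∃ q : ℚ, θ + θ ∘ MulAut.conjNormal y = q • fun a : H => f a := by
  obtain ⟨s, hs, hsum⟩ := hf.exists_multiset_restrict (H := H)
  let C : (H → ℂ) →ₗ[ℂ] (H → ℂ) := LinearMap.funLeft ℂ ℂ (MulAut.conjNormal y)
  have hC (k : H → ℂ) : C k = k ∘ MulAut.conjNormal y := rfl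
  have hinv : C (fun a : H => f a) = fun a : H => f a :=
    funext fun a => hf.conj_invariant y a
  have hk (k : H → ℂ) (hk : k ∈ s) : k + C k = θ + C θ := by
    rcases hf.eq_or_eq_of_mem_restrict hH hθ hfθ hy hs hsum hk with rfl | rfl
    · rfl
    · have hyy : y * y ∈ H := (Subgroup.mul_mem_iff_of_index_two hH).2 Iff.rfl
      rw [hC, hC, ← comp_conjNormal_mul, hθ.comp_conjNormal_of_mem hyy, add_comm]
  have h2 : (2 : ℂ) • (fun a : H => f a) = (s.card : ℂ) • (θ + C θ) := by
    have h : ((LinearMap.id : (H → ℂ) →ₗ[ℂ] (H → ℂ)) + C) s.sum = s.card • (θ + C θ) := by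
      rw [map_multiset_sum, ← Multiset.sum_replicate]
      congr 1
      exact Multiset.map_congr rfl hk |>.trans (Multiset.map_const' _ _)
    rw [hsum, LinearMap.add_apply, hinv, LinearMap.id_apply, ← two_smul ℂ] at h
    rw [h, Nat.cast_smul_eq_nsmul]
  have hcard : (s.card : ℂ) ≠ 0 := by
    intro h0
    rw [Nat.cast_eq_zero, Multiset.card_eq_zero] at h0
    rw [← hsum, h0] at hfθ
    simp at hfθ
  refine ⟨2 / s.card, ?_⟩
  rw [← hC, ← inv_smul_smul₀ hcard (θ + C θ), ← h2]
  ext a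
  simp [Rat.smul_def]
  ring

end IndexTwo

end CharacterTheory

section TwoRegular

variable {G : Type} [Group G]

/-- `twoReg` as a linear map. -/
noncomputable def twoRegLinear (G : Type) [Group G] : (G → ℂ) →ₗ[ℚ] (G → ℂ) where
  toFun := twoReg
  map_add' f h := by ext g; simp only [twoReg, Pi.add_apply]; split_ifs <;> simp
  map_smul' q f := by ext g; simp only [twoReg, Pi.smul_apply]; split_ifs <;> simp

lemma twoRegLinear_apply (f : G → ℂ) : twoRegLinear G f = twoReg f := rfl

lemma twoReg_restrict {H : Subgroup G} (f : G → ℂ) :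
    twoReg (fun a : H => f a) = fun a : H => twoReg f a := by
  ext a
  simp [twoReg]

/-- A permutation of even order commutes with an odd permutation, namely one of its cycles. -/
lemma Equiv.Perm.exists_commute_sign_eq_neg_one {α : Type*} [Fintype α] [DecidableEq α]
    {g : Equiv.Perm α} (hg : ¬ Odd (orderOf g)) : ∃ c, Commute c g ∧ Equiv.Perm.sign c = -1 := by
  obtain ⟨m, hm, h2⟩ : ∃ m ∈ g.cycleType, 2 ∣ m := by
    by_contra! hcon
    refine hg (Nat.coprime_two_left.1 ?_)
    rw [← Equiv.Perm.lcm_cycleType]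
    refine Multiset.induction_on (p := fun s => (∀ m ∈ s, ¬ 2 ∣ m) → Nat.Coprime 2 s.lcm)
      g.cycleType (by simp) (fun m s ih hs => ?_) hcon
    rw [Multiset.lcm_cons]
    refine Nat.Coprime.coprime_dvd_right (Nat.lcm_dvd_mul m s.lcm) (Nat.Coprime.mul_right ?_ ?_)
    · exact (Nat.prime_two.coprime_iff_not_dvd).2 (hs m (Multiset.mem_cons_self m s))
    · exact ih fun k hk => hs k (Multiset.mem_cons_of_mem hk)
  rw [Equiv.Perm.cycleType_def] at hm
  obtain ⟨c, hc, rfl⟩ := Multiset.mem_map.1 hm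
  refine ⟨c, Equiv.Perm.self_mem_cycle_factors_commute hc, ?_⟩
  rw [(Equiv.Perm.mem_cycleFactorsFinset_iff.1 hc).1.sign]
  rw [Function.comp_apply, ← even_iff_two_dvd] at h2
  rw [h2.neg_one_pow]

/-- An even permutation of even order is conjugate, in the alternating group, to its conjugates
by odd permutations. -/
lemma IsIrrChar.conjNormal_apply_of_not_odd {n : ℕ} {θ : alternatingGroup (Fin n) → ℂ}
    (hθ : IsIrrChar (alternatingGroup (Fin n)) θ) {y : Equiv.Perm (Fin n)}
    (hy : Equiv.Perm.sign y = -1) {a : alternatingGroup (Fin n)} (ha : ¬ Odd (orderOf a)) :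
    θ (MulAut.conjNormal y a) = θ a := by
  rw [← Subgroup.orderOf_coe] at ha
  obtain ⟨c, hc, hsign⟩ := Equiv.Perm.exists_commute_sign_eq_neg_one ha
  have hyc : y * c ∈ alternatingGroup (Fin n) := by
    simp [Equiv.Perm.mem_alternatingGroup, hy, hsign]
  have h : MulAut.conjNormal c a = a := by
    ext1
    rw [MulAut.conjNormal_apply, hc.eq, mul_inv_cancel_right]
  conv_rhs => rw [← hθ.comp_conjNormal_of_mem hyc, Function.comp_apply, map_mul,
    MulAut.mul_apply, h]

lemma mem_alternatingGroup_of_odd_orderOf {n : ℕ} {g : Equiv.Perm (Fin n)}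
    (hg : Odd (orderOf g)) : g ∈ alternatingGroup (Fin n) := by
  rw [Equiv.Perm.mem_alternatingGroup]
  rcases Int.units_eq_one_or (Equiv.Perm.sign g) with h | h
  · exact h
  · have h1 := congrArg Equiv.Perm.sign (pow_orderOf_eq_one g)
    rw [map_pow, h, hg.neg_one_pow, map_one] at h1
    exact absurd h1 (by decide)

end TwoRegular

section Alternating

variable {n : ℕ} {B : Set (Equiv.Perm (Fin n) → ℂ)}

lemma alternatingGroup_index_eq_two {y : Equiv.Perm (Fin n)} (hy : Equiv.Perm.sign y = -1) :
    (alternatingGroup (Fin n)).index = 2 := by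
  have : Nontrivial (Fin n) := by
    by_contra h
    rw [not_nontrivial_iff_subsingleton] at h
    rw [Subsingleton.elim y 1, map_one] at hy
    exact absurd hy (by decide)
  exact alternatingGroup.index_eq_two

lemma mem_restrictionToAlternating {θ : alternatingGroup (Fin n) → ℂ} :
    θ ∈ restrictionToAlternating n B ↔ IsIrrChar (alternatingGroup (Fin n)) θ ∧
      ∃ f ∈ B, charPairing θ (fun a : alternatingGroup (Fin n) => f a) ≠ 0 :=
  Iff.rfl

/-- The restriction to the alternating group of the span of `B` lies in the span of its
constituents. -/
lemma twoReg_restrict_mem_span (hB : B ⊆ {f | IsIrrChar (Equiv.Perm (Fin n)) f})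
    {f : Equiv.Perm (Fin n) → ℂ} (hf : twoReg f ∈ Submodule.span ℤ (twoReg '' B)) :
    twoReg (fun a : alternatingGroup (Fin n) => f a) ∈
      Submodule.span ℤ (twoReg '' restrictionToAlternating n B) := by
  rw [twoReg_restrict]
  let r : (Equiv.Perm (Fin n) → ℂ) →ₗ[ℤ] (alternatingGroup (Fin n) → ℂ) :=
    LinearMap.funLeft ℤ ℂ (↑)
  have h := Submodule.mem_map_of_mem (f := r) hf
  rw [Submodule.map_span, Set.image_image] at h
  refine Submodule.span_le.2 ?_ h
  rintro _ ⟨ψ, hψ, rfl⟩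
  obtain ⟨s, hs, hsum⟩ := (hB hψ).exists_multiset_restrict (H := alternatingGroup (Fin n))
  have h1 : r (twoReg ψ) = twoRegLinear _ s.sum := by
    rw [hsum, twoRegLinear_apply, twoReg_restrict]; rfl
  change r (twoReg ψ) ∈ _
  rw [h1, map_multiset_sum]
  refine multiset_sum_mem _ fun x hx => ?_
  obtain ⟨θ, hθ, rfl⟩ := Multiset.mem_map.1 hx
  refine Submodule.subset_span ⟨θ, ⟨hs θ hθ, ψ, hψ, ?_⟩, rfl⟩
  have := charPairing_multiset_sum_ne_zero hs hθ
  rwa [hsum] at this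

lemma span_twoReg_restrictionToAlternating
    (hB : IsTwoBasicSet (Equiv.Perm (Fin n)) B)
    (hself : ∀ f : Equiv.Perm (Fin n) → ℂ, IsIrrChar (Equiv.Perm (Fin n)) f →
      (fun g => ((Equiv.Perm.sign g : ℤ) : ℂ) * f g) = f → f ∈ B) :
    Submodule.span ℤ (twoReg '' restrictionToAlternating n B) =
      Submodule.span ℤ (twoReg '' {f | IsIrrChar (alternatingGroup (Fin n)) f}) := by
  refine le_antisymm (Submodule.span_mono (Set.image_mono fun θ hθ => hθ.1))
    (Submodule.span_le.2 ?_)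
  rintro _ ⟨θ, hθ, rfl⟩
  obtain ⟨f, hf, hfθ⟩ :=
    IsIrrChar.exists_charPairing_restrict_ne_zero (alternatingGroup (Fin n)) hθ
  by_cases hsf : (fun g => ((Equiv.Perm.sign g : ℤ) : ℂ) * f g) = f
  · exact Submodule.subset_span ⟨θ, ⟨hθ, f, hself f hf hsf, hfθ⟩, rfl⟩
  obtain ⟨x, hx⟩ := Function.ne_iff.1 hsf
  have hsign : Equiv.Perm.sign x = -1 := by
    refine (Int.units_eq_one_or _).resolve_left fun h => hx ?_
    simp [h]
  have hfx : f x ≠ 0 := fun h => hx (by simp [h])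
  have hxA : x ∉ alternatingGroup (Fin n) := by
    rw [Equiv.Perm.mem_alternatingGroup, hsign]; decide
  have hres := hf.restrict_of_ne_zero (alternatingGroup_index_eq_two hsign) hxA hfx
  have heq : (fun a : alternatingGroup (Fin n) => f a) = θ := by
    by_contra hne
    exact hfθ (hres.charPairing_eq_zero hθ hne)
  rw [← heq]
  refine twoReg_restrict_mem_span hB.1 ?_
  rw [hB.2.2]
  exact Submodule.subset_span ⟨f, hf, rfl⟩

lemma linearIndependent_twoReg_restrictionToAlternating
    (hB : IsTwoBasicSet (Equiv.Perm (Fin n)) B) :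
    LinearIndependent ℤ
      (fun f : restrictionToAlternating n B => twoReg (f : alternatingGroup (Fin n) → ℂ)) := by
  have hirr : LinearIndependent ℤ
      (fun f : restrictionToAlternating n B => (f : alternatingGroup (Fin n) → ℂ)) :=
    linearIndependent_isIrrChar.comp (Set.inclusion fun θ hθ => hθ.1) (Set.inclusion_injective _)
  rw [linearIndependent_iff'] at hirr ⊢
  intro s c hc
  refine hirr s c ?_
  set φ : alternatingGroup (Fin n) → ℂ := ∑ θ ∈ s, c θ • (θ : alternatingGroup (Fin n) → ℂ)
    with hφ
  have hreg : twoReg φ = 0 := by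
    rw [← twoRegLinear_apply, hφ, map_sum, ← hc]
    exact Finset.sum_congr rfl fun θ _ => map_zsmul _ _ _
  have hodd (a : alternatingGroup (Fin n)) (ha : Odd (orderOf a)) : φ a = 0 := by
    have := congrFun hreg a
    rwa [twoReg, if_pos ha] at this
  by_cases hy : ∃ y : Equiv.Perm (Fin n), Equiv.Perm.sign y = -1
  swap
  · refine funext fun a => hodd a ?_
    by_contra ha
    rw [← Subgroup.orderOf_coe] at ha
    obtain ⟨y, -, h⟩ := Equiv.Perm.exists_commute_sign_eq_neg_one ha
    exact hy ⟨y, h⟩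
  obtain ⟨y, hy⟩ := hy
  have hH := alternatingGroup_index_eq_two hy
  have hyA : y ∉ alternatingGroup (Fin n) := by
    rw [Equiv.Perm.mem_alternatingGroup, hy]; decide
  let C : (alternatingGroup (Fin n) → ℂ) →ₗ[ℚ] (alternatingGroup (Fin n) → ℂ) :=
    LinearMap.funLeft ℚ ℂ (MulAut.conjNormal y)
  let r : (Equiv.Perm (Fin n) → ℂ) →ₗ[ℚ] (alternatingGroup (Fin n) → ℂ) :=
    LinearMap.funLeft ℚ ℂ (↑)
  have hCφ : C φ = φ := by
    ext a
    by_cases ha : Odd (orderOf a)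
    · have ha' : Odd (orderOf (MulAut.conjNormal y a)) := by
        rwa [MulEquiv.orderOf_eq]
      exact (hodd _ ha').trans (hodd a ha).symm
    · change φ (MulAut.conjNormal y a) = φ a
      simp only [hφ, Finset.sum_apply, Pi.smul_apply]
      exact Finset.sum_congr rfl fun θ _ =>
        congrArg _ (θ.2.1.conjNormal_apply_of_not_odd hy ha)
  have hBQ : LinearIndependent ℚ (fun f : B => twoRegLinear _ (f : Equiv.Perm (Fin n) → ℂ)) :=
    (LinearIndependent.iff_fractionRing ℤ ℚ).1 hB.2.1
  have hmem : φ + C φ ∈ (Submodule.span ℚ B).map r := by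
    rw [hφ, map_sum, ← Finset.sum_add_distrib]
    refine Submodule.sum_mem _ fun θ _ => ?_
    rw [map_zsmul, ← smul_add]
    refine zsmul_mem ?_ _
    obtain ⟨hθ, f, hf, hfθ⟩ := mem_restrictionToAlternating.1 θ.2
    obtain ⟨q, hq⟩ := (hB.1 hf).exists_add_comp_conjNormal_eq_smul hH hθ hfθ hyA
    exact ⟨q • f, Submodule.smul_mem _ _ (Submodule.subset_span hf), hq.symm⟩
  obtain ⟨F, hF, hFr⟩ := hmem
  have hFreg : twoRegLinear _ F = 0 := by
    ext g
    by_cases hg : Odd (orderOf g)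
    · have hgA := mem_alternatingGroup_of_odd_orderOf hg
      have hg' : Odd (orderOf (⟨g, hgA⟩ : alternatingGroup (Fin n))) := by
        rwa [← Subgroup.orderOf_coe]
      have h := congrFun hFr ⟨g, hgA⟩
      rw [hCφ, Pi.add_apply, hodd _ hg', add_zero] at h
      rw [twoRegLinear_apply, twoReg, if_pos hg]
      exact h
    · rw [twoRegLinear_apply, twoReg, if_neg hg]; rfl
  have hF0 : F = 0 := by
    rw [← Subtype.range_coe (s := B), SetLike.mem_coe,
      Finsupp.mem_span_range_iff_exists_finsupp] at hF
    obtain ⟨l, rfl⟩ := hF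
    have hl : l = 0 := by
      refine (linearIndependent_iff.1 hBQ) l ?_
      rw [← hFreg, Finsupp.linearCombination_apply, map_finsuppSum]
      exact Finset.sum_congr rfl fun f _ => (map_smul _ _ _).symm
    rw [hl, Finsupp.sum_zero_index]
  rw [hF0, map_zero, hCφ, ← two_smul ℂ] at hFr
  exact (smul_eq_zero.1 hFr.symm).resolve_left two_ne_zero

end Alternating

/-- if B is a 2-basic set of S_n containing every irreducible character χ with
ε ⊗ χ = χ, then its restriction to A_n is a 2-basic set of A_n. -/
theorem restriction_of_twoBasicSet_isTwoBasicSet (n : ℕ) (hn : 0 < n)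
    (B : Set (Equiv.Perm (Fin n) → ℂ))
    (hB : IsTwoBasicSet (Equiv.Perm (Fin n)) B)
    (hself : ∀ f : Equiv.Perm (Fin n) → ℂ, IsIrrChar (Equiv.Perm (Fin n)) f →
      (fun g => ((Equiv.Perm.sign g : ℤ) : ℂ) * f g) = f → f ∈ B) :
    IsTwoBasicSet (alternatingGroup (Fin n)) (restrictionToAlternating n B) := by
  exact ⟨fun θ hθ => hθ.1, linearIndependent_twoReg_restrictionToAlternating hB,
    span_twoReg_restrictionToAlternating hB hself⟩
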